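/- For positive integers β and distinct positive integers x_1,...,x_n, the determinant of the n×n matrix with (i,j) entry (β−1)!/(x_i+j+1)_β equals [(β−1)!·β!···(β+n−2)!] / [(x_1+2)_{β+n−1}···(x_n+2)_{β+n−1}] · ∏_{1≤i<j≤n}(x_j−x_i). -/

import Mathlib

/-!
Multiplying row `i` by `(y_i)_{β+n-1}` turns the entry `1 / (y_i + j)_β` into
`∏_{k<j} (y_i + k) · ∏_{j≤k<n-1} (y_i + β + k)`, an instance of Krattenthaler's determinant with
`A_k = β + k` and `B_k = k`. The latter is a Vandermonde determinant in the `y_i` times the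
determinant of the coefficients of the polynomials `∏_{k<j} (X + B_k) · ∏_{j≤k<n-1} (X + A_k)`.
Subtracting from each polynomial its predecessor lowers every degree but the first, and leaves
scalar multiples of the polynomials of the same family for the shifted sequence `A_{k+1}`; the
coefficient determinant is therefore computed by induction.
-/

open Finset Matrix Polynomial

section Krattenthaler

variable {R : Type*} [CommRing R]

theorem det_eval_eq_det_vandermonde_mul_det_coeff {n : ℕ} (v : Fin n → R) (p : Fin n → R[X])
    (hp : ∀ j, (p j).natDegree < n) :
    det (of fun i j => (p j).eval (v i)) =
      det (vandermonde v) * det (of fun i j : Fin n => (p j).coeff i) := by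
  rw [← det_mul]
  congr 1
  ext i j
  simp only [of_apply, mul_apply, vandermonde_apply]
  rw [eval_eq_sum_range' (hp j), sum_range]
  exact sum_congr rfl fun k _ => mul_comm _ _

/-- The column polynomials of Krattenthaler's determinant. The sequences `A` and `B` are indexed
from `0`, and `j` runs over `0, …, n`, where the polynomial has degree `n`. -/
noncomputable def krattenthalerPoly (A B : ℕ → R) (n j : ℕ) : R[X] :=
  (∏ k ∈ Ico j n, (X + C (A k))) * ∏ k ∈ range j, (X + C (B k))

theorem eval_krattenthalerPoly (A B : ℕ → R) (n j : ℕ) (x : R) :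
    (krattenthalerPoly A B n j).eval x = (∏ k ∈ Ico j n, (x + A k)) * ∏ k ∈ range j, (x + B k) := by
  simp [krattenthalerPoly, eval_prod]

theorem monic_prod_X_add_C {ι : Type*} (s : Finset ι) (f : ι → R) :
    (∏ k ∈ s, (X + C (f k))).Monic :=
  monic_prod_of_monic _ _ fun _ _ => monic_X_add_C _

theorem natDegree_prod_X_add_C [Nontrivial R] {ι : Type*} (s : Finset ι) (f : ι → R) :
    (∏ k ∈ s, (X + C (f k))).natDegree = #s := by
  simp [natDegree_prod_of_monic _ _ fun _ _ => monic_X_add_C _]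

theorem monic_krattenthalerPoly (A B : ℕ → R) (n j : ℕ) : (krattenthalerPoly A B n j).Monic :=
  (monic_prod_X_add_C _ A).mul (monic_prod_X_add_C _ B)

theorem natDegree_krattenthalerPoly [Nontrivial R] (A B : ℕ → R) {n j : ℕ} (hj : j ≤ n) :
    (krattenthalerPoly A B n j).natDegree = n := by
  rw [krattenthalerPoly, (monic_prod_X_add_C _ A).natDegree_mul (monic_prod_X_add_C _ B),
    natDegree_prod_X_add_C, natDegree_prod_X_add_C, Nat.card_Ico, card_range,
    Nat.sub_add_cancel hj]

theorem krattenthalerPoly_succ_sub (A B : ℕ → R) {n j : ℕ} (hj : j ≤ n) :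
    krattenthalerPoly A B (n + 1) (j + 1) - krattenthalerPoly A B (n + 1) j =
      C (B j - A j) * krattenthalerPoly (fun k => A (k + 1)) B n j := by
  simp only [krattenthalerPoly]
  rw [prod_eq_prod_Ico_succ_bot (Nat.lt_succ_of_le hj), prod_range_succ,
    prod_Ico_add' (fun k => X + C (A k)) j n 1, C_sub]
  ring

theorem coeff_krattenthalerPoly_self (A B : ℕ → R) {n j : ℕ} (hj : j ≤ n) :
    (krattenthalerPoly A B n j).coeff n = 1 := by
  nontriviality R
  simpa only [natDegree_krattenthalerPoly A B hj] using
    (monic_krattenthalerPoly A B n j).coeff_natDegree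

theorem coeff_krattenthalerPoly_succ_self (A B : ℕ → R) {n j : ℕ} (hj : j ≤ n) :
    (krattenthalerPoly A B n j).coeff (n + 1) = 0 := by
  nontriviality R
  exact coeff_eq_zero_of_natDegree_lt
    ((natDegree_krattenthalerPoly A B hj).trans_lt n.lt_succ_self)

theorem det_eq_of_last_row_succ_eq_zero {n : ℕ} (M : Matrix (Fin (n + 1)) (Fin (n + 1)) R)
    (hM : ∀ j : Fin n, M (Fin.last n) j.succ = 0) :
    det M = (-1) ^ n * M (Fin.last n) 0 * det (M.submatrix Fin.castSucc Fin.succ) := by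
  simp [det_succ_row M (Fin.last n), Fin.sum_univ_succ, hM]

theorem det_coeff_krattenthalerPoly_succ (A B : ℕ → R) (n : ℕ) :
    det (of fun i j : Fin (n + 2) => (krattenthalerPoly A B (n + 1) j).coeff i) =
      (∏ j ∈ range (n + 1), (A j - B j)) *
        det (of fun i j : Fin (n + 1) =>
          (krattenthalerPoly (fun k => A (k + 1)) B n j).coeff i) := by
  let r (j : ℕ) : R[X] := krattenthalerPoly (fun k => A (k + 1)) B n j
  let N : Matrix (Fin (n + 2)) (Fin (n + 2)) R := of fun i =>
    Fin.cons ((krattenthalerPoly A B (n + 1) 0).coeff i)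
      fun j : Fin (n + 1) => (B j - A j) * (r j).coeff i
  have det_eq_N :
      det (of fun i j : Fin (n + 2) => (krattenthalerPoly A B (n + 1) j).coeff i) = det N := by
    refine det_eq_of_forall_col_eq_smul_add_pred (fun _ => 1) (fun i => rfl) fun i j => ?_
    have h := congrArg (coeff · i) (krattenthalerPoly_succ_sub A B j.is_le)
    simp only [coeff_sub, coeff_C_mul] at h
    simp [N, r, ← h]
  have N_last_zero : N (Fin.last _) 0 = 1 := coeff_krattenthalerPoly_self A B (Nat.zero_le _)
  have N_last_succ (j : Fin (n + 1)) : N (Fin.last _) j.succ = 0 := by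
    simp [N, r, coeff_krattenthalerPoly_succ_self _ B j.is_le]
  have det_minor : det (N.submatrix Fin.castSucc Fin.succ) =
      (∏ j : Fin (n + 1), (B j - A j)) * det (of fun i j : Fin (n + 1) => (r j).coeff i) :=
    det_mul_row (fun j : Fin (n + 1) => B j - A j) (of fun i j => (r j).coeff i)
  have sign_eq : (-1) ^ (n + 1) * ∏ j : Fin (n + 1), (B j - A j) =
      ∏ j ∈ range (n + 1), (A j - B j) := by
    rw [prod_range, ← Fin.prod_const, ← prod_mul_distrib]
    simp
  rw [det_eq_N, det_eq_of_last_row_succ_eq_zero N N_last_succ, N_last_zero, det_minor, mul_one,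
    ← mul_assoc, sign_eq]

theorem det_coeff_krattenthalerPoly (A B : ℕ → R) (n : ℕ) :
    det (of fun i j : Fin (n + 1) => (krattenthalerPoly A B n j).coeff i) =
      ∏ j ∈ range n, ∏ i ∈ range (j + 1), (A j - B i) := by
  induction n generalizing A with
  | zero => simp [krattenthalerPoly]
  | succ n ih =>
    have split_diagonal : ∏ j ∈ range (n + 1), ∏ i ∈ range (j + 1), (A j - B i) =
        (∏ j ∈ range (n + 1), (A j - B j)) *
          ∏ j ∈ range n, ∏ i ∈ range (j + 1), (A (j + 1) - B i) := by
      simp only [fun j => prod_range_succ (fun i => A j - B i) j, prod_mul_distrib]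
      rw [prod_range_succ' (fun j => ∏ i ∈ range j, (A j - B i)), range_zero, prod_empty, mul_one,
        mul_comm]
    rw [det_coeff_krattenthalerPoly_succ, ih, split_diagonal]

/-- Krattenthaler's determinant lemma; its `A_2, …, A_N` and `B_2, …, B_N` for an `N × N` matrix are
the `A k` and `B k` with `k < n`, where `N = n + 1`. -/
theorem det_prod_add_mul_prod_add (n : ℕ) (A B : ℕ → R) (x : Fin (n + 1) → R) :
    det (of fun i j : Fin (n + 1) =>
      (∏ k ∈ Ico j.val n, (x i + A k)) * ∏ k ∈ range j, (x i + B k)) =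
    (∏ i, ∏ j ∈ Ioi i, (x j - x i)) * ∏ j ∈ range n, ∏ i ∈ range (j + 1), (A j - B i) := by
  nontriviality R
  rw [← det_vandermonde, ← det_coeff_krattenthalerPoly,
    ← det_eval_eq_det_vandermonde_mul_det_coeff]
  · simp only [eval_krattenthalerPoly]
  · intro j
    rw [natDegree_krattenthalerPoly A B j.is_le]
    exact n.lt_succ_self

end Krattenthaler

theorem ascPochhammer_eval_eq_prod_range {R : Type*} [CommSemiring R] (n : ℕ) (r : R) :
    (ascPochhammer R n).eval r = ∏ k ∈ range n, (r + k) := by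
  induction n with
  | zero => simp
  | succ n ih => rw [ascPochhammer_succ_eval, ih, prod_range_succ]

theorem ascPochhammer_add_eval {R : Type*} [CommSemiring R] (n m : ℕ) (r : R) :
    (ascPochhammer R (n + m)).eval r =
      (ascPochhammer R n).eval r * (ascPochhammer R m).eval (r + n) := by
  simp [← ascPochhammer_mul, eval_comp]

theorem ascPochhammer_add_eval_eq_mul_prod {R : Type*} [CommSemiring R] (β : ℕ) {m j : ℕ}
    (hj : j ≤ m) (r : R) :
    (ascPochhammer R (β + m)).eval r = (ascPochhammer R β).eval (r + j) *
      ((∏ k ∈ Ico j m, (r + (β + k : ℕ))) * ∏ k ∈ range j, (r + k)) := by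
  obtain ⟨l, rfl⟩ := Nat.exists_eq_add_of_le hj
  rw [show β + (j + l) = j + β + l by ring, ascPochhammer_add_eval, ascPochhammer_add_eval,
    ascPochhammer_eval_eq_prod_range j, ascPochhammer_eval_eq_prod_range l, prod_Ico_eq_prod_range,
    Nat.add_sub_cancel_left]
  push_cast
  simp only [add_assoc, add_left_comm (β : R)]
  ring

theorem prod_range_natCast_add_sub {R : Type*} [CommRing R] (β j : ℕ) :
    ∏ i ∈ range (j + 1), (((β + j : ℕ) : R) - i) = β.ascFactorial (j + 1) := by
  rw [← descPochhammer_eval_eq_prod_range, descPochhammer_eval_eq_descFactorial,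
    ← Nat.add_descFactorial_eq_ascFactorial']
  rfl

theorem det_of_const_div {ι K : Type*} [Fintype ι] [DecidableEq ι] [Field K] (c : K)
    (f : ι → ι → K) :
    det (of fun i j => c / f i j) = c ^ Fintype.card ι * det (of fun i j => (f i j)⁻¹) := by
  simp only [div_eq_mul_inv, ← det_smul]
  rfl

theorem general_det_eval_general {K : Type*} [Field K] (n β : ℕ) (y : Fin n → K)
    (hy : ∀ i, (ascPochhammer K (β + n - 1)).eval (y i) ≠ 0) :
    det (of fun i j : Fin n => ((ascPochhammer K β).eval (y i + j.val))⁻¹) =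
      (∏ j ∈ range n, (β.ascFactorial j : K)) /
        (∏ i, (ascPochhammer K (β + n - 1)).eval (y i)) *
        ∏ i, ∏ j ∈ Ioi i, (y j - y i) := by
  obtain _ | m := n
  · simp
  simp only [← add_assoc, Nat.add_sub_cancel] at hy ⊢
  let P : Matrix (Fin (m + 1)) (Fin (m + 1)) K := of fun i j =>
    (∏ k ∈ Ico j.val m, (y i + (β + k : ℕ))) * ∏ k ∈ range j, (y i + k)
  have entry_eq (i j : Fin (m + 1)) : ((ascPochhammer K β).eval (y i + j.val))⁻¹ =
      ((ascPochhammer K (β + m)).eval (y i))⁻¹ * P i j := by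
    have hsplit : (ascPochhammer K (β + m)).eval (y i) =
        (ascPochhammer K β).eval (y i + j.val) * P i j :=
      ascPochhammer_add_eval_eq_mul_prod β j.is_le (y i)
    have hP : P i j ≠ 0 := right_ne_zero_of_mul (hsplit ▸ hy i)
    rw [hsplit, mul_inv, inv_mul_cancel_right₀ hP]
  have det_P : det P =
      (∏ i, ∏ j ∈ Ioi i, (y j - y i)) * ∏ j ∈ range (m + 1), (β.ascFactorial j : K) := by
    rw [prod_range_succ', Nat.ascFactorial_zero, Nat.cast_one, mul_one]
    simp only [← prod_range_natCast_add_sub]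
    exact det_prod_add_mul_prod_add m (fun k => ((β + k : ℕ) : K)) (fun k => (k : K)) y
  simp only [entry_eq]
  rw [det_mul_column, det_P, prod_inv_distrib]
  ring

/-- For a positive integer β and distinct positive integers `x_1,…,x_n`,
`det((β−1)!/(x_i+j+1)_β) = [(β−1)!β!⋯(β+n−2)!]/[(x_1+2)_{β+n−1}⋯(x_n+2)_{β+n−1}]
  · ∏_{i<j}(x_j−x_i)` (1-based column index j). -/
theorem general_det_eval (n β : ℕ) (hβ : 0 < β) (x : Fin n → ℕ)
    (hx : ∀ i, 0 < x i) (hinj : Function.Injective x) :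
    Matrix.det (Matrix.of fun i j : Fin n =>
      ((β - 1).factorial : ℚ) / (Nat.ascFactorial (x i + j.val + 2) β : ℚ)) =
    (∏ j ∈ Finset.range n, ((β + j - 1).factorial : ℚ)) /
      (∏ i : Fin n, (Nat.ascFactorial (x i + 2) (β + n - 1) : ℚ)) *
      ∏ i : Fin n, ∏ j ∈ Finset.Ioi i, ((x j : ℚ) - (x i : ℚ)) := by
  have h := general_det_eval_general n β (fun i => (x i + 2 : ℚ)) fun i =>
    (ascPochhammer_pos _ _ (by positivity)).ne'
  simpa [det_of_const_div, ← Nat.factorial_mul_ascFactorial' β _ hβ, prod_mul_distrib,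
    Nat.cast_ascFactorial, add_right_comm, mul_assoc, mul_div_assoc] using
    congrArg (((β - 1).factorial : ℚ) ^ n * ·) h
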